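/- There is a constant C depending only on m and n such that the following holds: if P ∈ Γ₀⁺, then there exists F ∈ C^m(ℝⁿ) such that ‖F‖_{C^m(ℝⁿ)} ≤ C, F ≥ 0 everywhere on ℝⁿ, and J₀⁺(F) = P. -/

import Mathlib

open scoped BigOperators

noncomputable section

abbrev Euc (n : ℕ) : Type := EuclideanSpace ℝ (Fin n)
abbrev MPoly (n : ℕ) : Type := MvPolynomial (Fin n) ℝ

/-- Partial derivative in the `i`-th coordinate direction. -/
noncomputable def pD {n : ℕ} (i : Fin n) (F : Euc n → ℝ) : Euc n → ℝ :=
  fun x => fderiv ℝ F x (EuclideanSpace.single i (1 : ℝ))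

/-- The multi-index partial derivative `∂^α F`. -/
noncomputable def mD {n : ℕ} (α : Fin n → ℕ) (F : Euc n → ℝ) : Euc n → ℝ :=
  (((List.finRange n).flatMap fun i => List.replicate (α i) i)).foldr pD F

/-- Partial derivative within a set. -/
noncomputable def pDW {n : ℕ} (s : Set (Euc n)) (i : Fin n) (F : Euc n → ℝ) : Euc n → ℝ :=
  fun x => fderivWithin ℝ F s x (EuclideanSpace.single i (1 : ℝ))

/-- Multi-index partial derivative within a set. -/
noncomputable def mDW {n : ℕ} (s : Set (Euc n)) (α : Fin n → ℕ) (F : Euc n → ℝ) : Euc n → ℝ :=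
  (((List.finRange n).flatMap fun i => List.replicate (α i) i)).foldr (pDW s) F

/-- The order `|α|` of a multi-index. -/
def deg {n : ℕ} (α : Fin n → ℕ) : ℕ := ∑ i, α i

/-- Evaluation of an `n`-variable polynomial at a point of `ℝⁿ`. -/
noncomputable def peval {n : ℕ} (P : MPoly n) (x : Euc n) : ℝ :=
  MvPolynomial.eval (fun i => x i) P

/-- `F ∈ C^m(ℝⁿ)` with `‖F‖_{C^m(ℝⁿ)} ≤ M`. -/
def CmNormLe (m n : ℕ) (F : Euc n → ℝ) (M : ℝ) : Prop :=
  ContDiff ℝ (m : ℕ∞) F ∧ ∀ α : Fin n → ℕ, deg α ≤ m → ∀ x : Euc n, |mD α F x| ≤ M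

/-- `F ∈ C^{m-1,1}(ℝⁿ)` with `‖F‖_{C^{m-1,1}(ℝⁿ)} ≤ M`. -/
def CmLipNormLe (m n : ℕ) (F : Euc n → ℝ) (M : ℝ) : Prop :=
  ContDiff ℝ ((m - 1 : ℕ) : ℕ∞) F ∧
  (∀ α : Fin n → ℕ, deg α ≤ m - 1 → ∀ x : Euc n, |mD α F x| ≤ M) ∧
  (∀ α : Fin n → ℕ, deg α = m - 1 → ∀ i : Fin n, ∀ x : Euc n, ∀ t : ℝ,
    |mD α F (x + t • EuclideanSpace.single i (1 : ℝ)) - mD α F x| ≤ M * |t|)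

/-- `J_x(F) = P`, i.e. `P` is the `(m-1)`-st order Taylor polynomial of `F` at `x`. -/
def IsJetAt (m n : ℕ) (F : Euc n → ℝ) (x : Euc n) (P : MPoly n) : Prop :=
  P.totalDegree ≤ m - 1 ∧
  ∀ α : Fin n → ℕ, deg α ≤ m - 1 → mD α (peval P) x = mD α F x

/-- `J_x^+(F) = P`, i.e. `P` is the `m`-th order Taylor polynomial of `F` at `x`. -/
def IsJetPlusAt (m n : ℕ) (F : Euc n → ℝ) (x : Euc n) (P : MPoly n) : Prop :=
  P.totalDegree ≤ m ∧
  ∀ α : Fin n → ℕ, deg α ≤ m → mD α (peval P) x = mD α F x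

/-- Truncation of a polynomial: keep the monomials of total degree `≤ d`. -/
noncomputable def truncLE {n : ℕ} (d : ℕ) (P : MPoly n) : MPoly n :=
  ∑ s ∈ P.support.filter (fun s => (s.sum fun _ e => e) ≤ d),
    MvPolynomial.monomial s (P.coeff s)

/-- Substitution `y ↦ y + v` in a polynomial. -/
noncomputable def polyShift {n : ℕ} (v : Fin n → ℝ) (P : MPoly n) : MPoly n :=
  MvPolynomial.aeval (fun i => (MvPolynomial.X i + MvPolynomial.C (v i) : MPoly n)) P

/-- The `(m-1)`-st order Taylor polynomial of a polynomial `P` at `x`. -/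
noncomputable def jetTrunc (m n : ℕ) (x : Euc n) (P : MPoly n) : MPoly n :=
  polyShift (fun i => -(x i)) (truncLE (m - 1) (polyShift (fun i => x i) P))

/-- Multiplication of `(m-1)`-jets at `x`: `P ⊙_x Q = J_x(PQ)`. -/
noncomputable def jmul (m n : ℕ) (x : Euc n) (P Q : MPoly n) : MPoly n :=
  jetTrunc m n x (P * Q)

/-- `Γ*(x,M)`. -/
def GammaStar (m n : ℕ) (x : Euc n) (M : ℝ) : Set (MPoly n) :=
  {P | ∃ F : Euc n → ℝ, CmNormLe m n F M ∧ (∀ y, 0 ≤ F y) ∧ IsJetAt m n F x P}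

/-- `Γ_f(x,M)`. -/
def GammaF (m n : ℕ) (f : Euc n → ℝ) (x : Euc n) (M : ℝ) : Set (MPoly n) :=
  {P ∈ GammaStar m n x M | peval P x = f x}

/-- `Γ'*(x,M)` (the `C^{m-1,1}` version). -/
def GammaStar' (m n : ℕ) (x : Euc n) (M : ℝ) : Set (MPoly n) :=
  {P | ∃ F : Euc n → ℝ, CmLipNormLe m n F M ∧ (∀ y, 0 ≤ F y) ∧ IsJetAt m n F x P}

/-- `Γ'_f(x,M)`. -/
def GammaF' (m n : ℕ) (f : Euc n → ℝ) (x : Euc n) (M : ℝ) : Set (MPoly n) :=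
  {P ∈ GammaStar' m n x M | peval P x = f x}

/-- `Γ₀⁺`. -/
def Gamma0plus (m n : ℕ) : Set (MPoly n) :=
  {P | P.totalDegree ≤ m ∧
    (∀ β : Fin n → ℕ, deg β ≤ m → |mD β (peval P) 0| ≤ 1) ∧
    (∀ x : Euc n, 0 ≤ peval P x + ‖x‖ ^ m) ∧
    (∀ ε : ℝ, 0 < ε → ∃ δ : ℝ, 0 < δ ∧ ∀ x : Euc n, ‖x‖ ≤ δ → 0 ≤ peval P x + ε * ‖x‖ ^ m)}

/-- `Γ̃₀'`. -/
def GammaTilde0' (m n : ℕ) : Set (MPoly n) :=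
  {P | P.totalDegree ≤ m - 1 ∧
    (∀ β : Fin n → ℕ, deg β ≤ m - 1 → |mD β (peval P) 0| ≤ 1) ∧
    ∀ x : Euc n, 0 ≤ peval P x + ‖x‖ ^ m}

/-- The closed axis-parallel cube with center `c` and sidelength `δ`. -/
def cube {n : ℕ} (c : Euc n) (δ : ℝ) : Set (Euc n) :=
  {y | ∀ i, |y i - c i| ≤ δ / 2}

/-- `F ∈ C^{m-1,1}(Q)` with `‖F‖_{C^{m-1,1}(Q)} ≤ M`, for the cube `Q` of center `c`,
sidelength `δ`. -/
def CmLipOnCubeLe (m n : ℕ) (c : Euc n) (δ : ℝ) (F : Euc n → ℝ) (M : ℝ) : Prop :=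
  ContDiffOn ℝ ((m - 1 : ℕ) : ℕ∞) F (cube c δ) ∧
  (∀ α : Fin n → ℕ, deg α ≤ m - 1 → ∀ x ∈ cube c δ, |mDW (cube c δ) α F x| ≤ M) ∧
  (∀ α : Fin n → ℕ, deg α = m - 1 → ∀ i : Fin n, ∀ x ∈ cube c δ, ∀ t : ℝ,
    x + t • EuclideanSpace.single i (1 : ℝ) ∈ cube c δ →
    |mDW (cube c δ) α F (x + t • EuclideanSpace.single i (1 : ℝ)) - mDW (cube c δ) α F x|
      ≤ M * |t|)

/-!
Let `θ` be a cutoff at `0`. The product `θ P` has the right jet but may be negative. On a suitable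
ball of radius `d (j - 1)`, with `d j` tending to `0`, it is at least `-2⁻ʲ θ x * ‖x‖ ^ m`. On the
annulus `d j ≤ ‖x‖ < d (j - 1)` this is repaired by adding `2⁻ʲ` times a nonnegative smooth function
which equals `θ x * ‖x‖ ^ m` for `‖x‖ ≥ d j` and vanishes near `0`. By homogeneity of `‖x‖ ^ m` the
derivatives of order `≤ m` of these functions are bounded independently of `d j`, so the corrections
sum to a `C^m` function with vanishing `m`-jet at `0`.
-/

open Set Filter Topology

section DerivBound

variable {E F : Type*} [NormedAddCommGroup E] [NormedSpace ℝ E]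
  [NormedAddCommGroup F] [NormedSpace ℝ F] {m : ℕ} {f g : E → F} {s : Set E} {A B : ℝ}

/-- The derivatives of `f` of order at most `m` are bounded by `B` on `s`, in operator norm. This is
the coordinate-free counterpart of the bounds in `CmNormLe`. -/
def DerivBoundOn (m : ℕ) (f : E → F) (s : Set E) (B : ℝ) : Prop :=
  ∀ k ≤ m, ∀ x ∈ s, ‖iteratedFDeriv ℝ k f x‖ ≤ B

namespace DerivBoundOn

lemma mono (hf : DerivBoundOn m f s A) (hAB : A ≤ B) : DerivBoundOn m f s B :=
  fun k hk x hx => (hf k hk x hx).trans hAB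

lemma add (hfA : DerivBoundOn m f s A) (hgB : DerivBoundOn m g s B)
    (hf : ContDiff ℝ m f) (hg : ContDiff ℝ m g) :
    DerivBoundOn m (fun x => f x + g x) s (A + B) := by
  intro k hk x hx
  have hkm : (k : WithTop ℕ∞) ≤ m := mod_cast hk
  rw [fun_iteratedFDeriv_add_apply (hf.of_le hkm).contDiffAt (hg.of_le hkm).contDiffAt]
  exact norm_add_le_of_le (hfA k hk x hx) (hgB k hk x hx)

lemma const_smul (hfB : DerivBoundOn m f s B) (hf : ContDiff ℝ m f) (c : ℝ) :
    DerivBoundOn m (fun x => c • f x) s (|c| * B) := by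
  intro k hk x hx
  rw [iteratedFDeriv_const_smul_apply' (hf.of_le (mod_cast hk)).contDiffAt, norm_smul,
    Real.norm_eq_abs]
  gcongr
  exact hfB k hk x hx

lemma sum {ι : Type*} {t : Finset ι} {u : ι → E → F} {b : ι → ℝ}
    (hub : ∀ i ∈ t, DerivBoundOn m (u i) s (b i)) (hu : ∀ i ∈ t, ContDiff ℝ m (u i)) :
    DerivBoundOn m (fun x => ∑ i ∈ t, u i x) s (∑ i ∈ t, b i) := by
  intro k hk x hx
  rw [iteratedFDeriv_fun_sum_apply fun i hi => ((hu i hi).of_le (mod_cast hk)).contDiffAt]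
  exact norm_sum_le_of_le _ fun i hi => hub i hi k hk x hx

lemma tsum [CompleteSpace F] {ι : Type*} {u : ι → E → F} {b c : ι → ℝ}
    (hu : ∀ i, ContDiff ℝ m (u i)) (hb : Summable b)
    (hub : ∀ i, DerivBoundOn m (u i) univ (b i)) (hc : Summable c)
    (huc : ∀ i, DerivBoundOn m (u i) s (c i)) :
    DerivBoundOn m (fun x => ∑' i, u i x) s (∑' i, c i) := by
  intro k hk x hx
  rw [iteratedFDeriv_tsum_apply (N := m) (v := fun _ => b) hu (fun _ _ => hb)
    (fun k i x hk => hub i k (mod_cast hk) x trivial) (mod_cast hk) x]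
  exact tsum_of_norm_bounded hc.hasSum fun i => huc i k hk x hx

lemma contDiff_tsum [CompleteSpace F] {ι : Type*} {u : ι → E → F} {b : ι → ℝ}
    (hu : ∀ i, ContDiff ℝ m (u i)) (hb : Summable b)
    (hub : ∀ i, DerivBoundOn m (u i) univ (b i)) : ContDiff ℝ m fun x => ∑' i, u i x :=
  _root_.contDiff_tsum (N := m) (v := fun _ => b) hu (fun _ _ => hb)
    fun k i x hk => hub i k (mod_cast hk) x trivial

end DerivBoundOn

lemma exists_derivBoundOn_of_isCompact (hf : ContDiff ℝ m f) (hs : IsCompact s) :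
    ∃ B, 0 ≤ B ∧ DerivBoundOn m f s B := by
  have hbound (k : ℕ) (hk : k ≤ m) : ∃ b, ∀ x ∈ s, ‖iteratedFDeriv ℝ k f x‖ ≤ b :=
    hs.exists_bound_of_continuousOn (hf.continuous_iteratedFDeriv (mod_cast hk)).continuousOn
  choose! b hb using hbound
  refine ⟨∑ k ∈ Finset.range (m + 1), |b k|, by positivity, fun k hk x hx => ?_⟩
  calc ‖iteratedFDeriv ℝ k f x‖ ≤ |b k| := (hb k hk x hx).trans (le_abs_self _)
    _ ≤ ∑ k ∈ Finset.range (m + 1), |b k| :=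
        Finset.single_le_sum (f := fun k => |b k|) (fun _ _ => abs_nonneg _)
          (Finset.mem_range_succ_iff.2 hk)

lemma exists_derivBoundOn_smul_of_hasCompactSupport {θ : E → ℝ} (hθ : ContDiff ℝ m θ)
    (hsupp : HasCompactSupport θ) :
    ∃ A, 0 ≤ A ∧ ∀ (f : E → F) (B : ℝ), ContDiff ℝ m f → 0 ≤ B →
      DerivBoundOn m f (tsupport θ) B → DerivBoundOn m (fun x => θ x • f x) univ (A * B) := by
  obtain ⟨T, hT0, hT⟩ := exists_derivBoundOn_of_isCompact hθ hsupp
  refine ⟨2 ^ m * T, by positivity, fun f B hf hB0 hB k hk x _ => ?_⟩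
  by_cases hx : x ∈ tsupport θ
  · calc ‖iteratedFDeriv ℝ k (fun x => θ x • f x) x‖
      ≤ ∑ i ∈ Finset.range (k + 1), (k.choose i : ℝ) * ‖iteratedFDeriv ℝ i θ x‖ *
          ‖iteratedFDeriv ℝ (k - i) f x‖ := norm_iteratedFDeriv_smul_le hθ hf x (mod_cast hk)
    _ ≤ ∑ i ∈ Finset.range (k + 1), (k.choose i : ℝ) * T * B := by
        gcongr with i hi
        · exact hT i ((Finset.mem_range_succ_iff.1 hi).trans hk) x hx
        · exact hB (k - i) (k.sub_le i |>.trans hk) x hx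
    _ = 2 ^ k * T * B := by
        rw [← Finset.sum_mul, ← Finset.sum_mul]
        exact_mod_cast congrArg (fun N : ℕ => (N : ℝ) * T * B) (Nat.sum_range_choose k)
    _ ≤ 2 ^ m * T * B := by gcongr; norm_num
  · have hzero : (fun x => θ x • f x) =ᶠ[𝓝 x] 0 := by
      filter_upwards [notMem_tsupport_iff_eventuallyEq.1 hx] with y hy
      simp [hy]
    rw [(hzero.iteratedFDeriv ℝ k).eq_of_nhds]
    simpa using by positivity

end DerivBound

section Homogeneous

variable {E F : Type*} [NormedAddCommGroup E] [NormedSpace ℝ E]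
  [NormedAddCommGroup F] [NormedSpace ℝ F] {m : ℕ} {f : E → F}

/-- `f` is positively homogeneous of degree `m` outside the open unit ball. Only dilations by
`r ≥ 1` occur, as these preserve that region. -/
def HomogeneousOutsideUnitBall (m : ℕ) (f : E → F) : Prop :=
  ∀ r : ℝ, 1 ≤ r → ∀ x, 1 ≤ ‖x‖ → f (r • x) = r ^ m • f x

namespace HomogeneousOutsideUnitBall

lemma iteratedFDeriv_smul {k : ℕ} {r : ℝ} {x : E} (hhom : HomogeneousOutsideUnitBall m f)
    (hf : ContDiff ℝ m f) (hk : k ≤ m) (hr : 1 ≤ r) (hx : 1 < ‖x‖) :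
    iteratedFDeriv ℝ k f (r • x) = r ^ (m - k) • iteratedFDeriv ℝ k f x := by
  have hfk : ContDiff ℝ k f := hf.of_le (mod_cast hk)
  have hr0 : r ≠ 0 := by positivity
  have hloc : (fun z => f (r • z)) =ᶠ[𝓝 x] fun z => r ^ m • f z := by
    filter_upwards [continuous_norm.continuousAt.eventually (lt_mem_nhds hx)] with z hz
    exact hhom r hr z hz.le
  have hderiv : r ^ k • iteratedFDeriv ℝ k f (r • x) = r ^ m • iteratedFDeriv ℝ k f x := by
    have h := (hloc.iteratedFDeriv ℝ k).eq_of_nhds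
    rwa [iteratedFDeriv_comp_const_smul r hfk, iteratedFDeriv_const_smul_apply' hfk.contDiffAt] at h
  rw [← Nat.add_sub_of_le hk, pow_add, mul_smul] at hderiv
  simpa using smul_right_injective _ (pow_ne_zero k hr0) hderiv

lemma exists_norm_iteratedFDeriv_le [ProperSpace E]
    (hhom : HomogeneousOutsideUnitBall m f) (hf : ContDiff ℝ m f) :
    ∃ C, 0 ≤ C ∧ ∀ k ≤ m, ∀ x, ‖iteratedFDeriv ℝ k f x‖ ≤ C * max 1 ‖x‖ ^ (m - k) := by
  obtain ⟨C, hC0, hC⟩ :=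
    exists_derivBoundOn_of_isCompact hf (isCompact_closedBall (0 : E) 2)
  refine ⟨C, hC0, fun k hk x => ?_⟩
  rcases le_or_gt ‖x‖ 2 with hx | hx
  · calc ‖iteratedFDeriv ℝ k f x‖ ≤ C := hC k hk x (by simpa using hx)
      _ ≤ C * max 1 ‖x‖ ^ (m - k) :=
          le_mul_of_one_le_right hC0 (one_le_pow₀ (le_max_left _ _))
  -- Homogeneity is not available in a neighbourhood of the unit sphere, so project to radius `2`.
  · set r := ‖x‖ / 2 with hr
    have hr1 : 1 ≤ r := by linarith
    have hnorm : ‖r⁻¹ • x‖ = 2 := by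
      rw [norm_smul, norm_inv, Real.norm_of_nonneg (by positivity), hr]
      field_simp
    have hx_eq : x = r • r⁻¹ • x := (smul_inv_smul₀ (by positivity) x).symm
    calc ‖iteratedFDeriv ℝ k f x‖ = r ^ (m - k) * ‖iteratedFDeriv ℝ k f (r⁻¹ • x)‖ := by
          conv_lhs => rw [hx_eq]
          rw [hhom.iteratedFDeriv_smul hf hk hr1 (by linarith),
            norm_smul, norm_pow, Real.norm_of_nonneg (by positivity)]
      _ ≤ max 1 ‖x‖ ^ (m - k) * C := by
          gcongr
          · exact le_max_of_le_right (by linarith)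
          · exact hC k hk _ (by simp [hnorm])
      _ = C * max 1 ‖x‖ ^ (m - k) := mul_comm _ _

lemma exists_derivBoundOn_rescale [ProperSpace E]
    (hhom : HomogeneousOutsideUnitBall m f) (hf : ContDiff ℝ m f) :
    ∃ C, 0 ≤ C ∧ ∀ ρ : ℝ, 0 < ρ → ρ ≤ 1 →
      DerivBoundOn m (fun x => ρ ^ m • f (ρ⁻¹ • x)) (Metric.closedBall 0 1) C := by
  obtain ⟨C, hC0, hC⟩ := hhom.exists_norm_iteratedFDeriv_le hf
  refine ⟨C, hC0, fun ρ hρ0 hρ1 k hk x hx => ?_⟩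
  have hfk : ContDiff ℝ k f := hf.of_le (mod_cast hk)
  have hx1 : ‖x‖ ≤ 1 := by simpa using hx
  have hscale : ρ ^ m * ρ⁻¹ ^ k = ρ ^ (m - k) := by
    rw [inv_pow, ← div_eq_mul_inv, pow_sub₀ ρ hρ0.ne' hk, div_eq_mul_inv]
  have hmax : ρ * max 1 ‖ρ⁻¹ • x‖ ≤ 1 := by
    rw [norm_smul, norm_inv, Real.norm_of_nonneg hρ0.le, mul_max_of_nonneg _ _ hρ0.le, mul_one,
      mul_inv_cancel_left₀ hρ0.ne']
    exact max_le hρ1 hx1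
  have hcomp : ContDiff ℝ k fun z => f (ρ⁻¹ • z) := hfk.comp (contDiff_const_smul _)
  rw [iteratedFDeriv_const_smul_apply' hcomp.contDiffAt,
    iteratedFDeriv_comp_const_smul _ hfk, smul_smul, hscale, norm_smul,
    Real.norm_of_nonneg (by positivity)]
  calc ρ ^ (m - k) * ‖iteratedFDeriv ℝ k f (ρ⁻¹ • x)‖
      ≤ ρ ^ (m - k) * (C * max 1 ‖ρ⁻¹ • x‖ ^ (m - k)) := by gcongr; exact hC k hk _
    _ = C * (ρ * max 1 ‖ρ⁻¹ • x‖) ^ (m - k) := by rw [mul_pow]; ring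
    _ ≤ C := mul_le_of_le_one_right hC0 (pow_le_one₀ (by positivity) hmax)

end HomogeneousOutsideUnitBall

end Homogeneous

section NormPow

variable {E : Type*} [NormedAddCommGroup E] [InnerProductSpace ℝ E] {m : ℕ} {ρ : ℝ} {x : E}

variable (E) in
/-- The smooth cutoff used throughout: equal to `1` on the ball of radius `1 / 2` about `0` and
supported in the unit ball. -/
def cutoff : ContDiffBump (0 : E) := ⟨1 / 2, 1, by norm_num, by norm_num⟩

lemma iteratedFDeriv_cutoff_mul_apply_zero (k : ℕ) (p : E → ℝ) :
    iteratedFDeriv ℝ k (fun x => cutoff E x * p x) 0 = iteratedFDeriv ℝ k p 0 := by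
  have hloc : (fun x => cutoff E x * p x) =ᶠ[𝓝 0] p := by
    filter_upwards [(cutoff E).eventuallyEq_one] with x hx
    simp [hx]
  exact (hloc.iteratedFDeriv ℝ k).eq_of_nhds

/-- The function `‖x‖ ^ m`, made smooth by cutting it off near `0`. -/
def outerNormPow (m : ℕ) (x : E) : ℝ := (1 - cutoff E x) * ‖x‖ ^ m

lemma outerNormPow_nonneg (m : ℕ) (x : E) : 0 ≤ outerNormPow m x :=
  mul_nonneg (sub_nonneg.2 (cutoff E).le_one) (by positivity)

lemma outerNormPow_of_one_le_norm (m : ℕ) (hx : 1 ≤ ‖x‖) : outerNormPow m x = ‖x‖ ^ m := by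
  have hzero : cutoff E x = 0 := (cutoff E).zero_of_le_dist (by simpa [cutoff] using hx)
  simp [outerNormPow, hzero]

lemma outerNormPow_eventuallyEq_zero (m : ℕ) : outerNormPow m =ᶠ[𝓝 (0 : E)] 0 := by
  filter_upwards [(cutoff E).eventuallyEq_one] with x hx
  simp [outerNormPow, hx]

lemma homogeneousOutsideUnitBall_outerNormPow (m : ℕ) :
    HomogeneousOutsideUnitBall m (outerNormPow m : E → ℝ) := by
  intro r hr x hx
  have hnorm : ‖r • x‖ = r * ‖x‖ := by rw [norm_smul, Real.norm_of_nonneg (by positivity)]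
  rw [outerNormPow_of_one_le_norm m (hnorm ▸ one_le_mul_of_one_le_of_one_le hr hx),
    outerNormPow_of_one_le_norm m hx, hnorm, mul_pow, smul_eq_mul]

lemma contDiff_outerNormPow (m : ℕ) (N : ℕ∞) : ContDiff ℝ N (outerNormPow m : E → ℝ) := by
  refine contDiff_iff_contDiffAt.2 fun x => ?_
  rcases eq_or_ne x 0 with rfl | hx
  · exact contDiffAt_const.congr_of_eventuallyEq (outerNormPow_eventuallyEq_zero m)
  · exact (contDiffAt_const.sub (cutoff E).contDiffAt).mul ((contDiffAt_norm ℝ hx).pow m)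

/-- A smooth truncation of `‖x‖ ^ m` to the annulus of radii `ρ` and `1`, vanishing near `0`. -/
def annularNormPow (m : ℕ) (ρ : ℝ) (x : E) : ℝ :=
  cutoff E x • ρ ^ m • outerNormPow m (ρ⁻¹ • x)

lemma annularNormPow_nonneg (m : ℕ) (hρ : 0 ≤ ρ) (x : E) : 0 ≤ annularNormPow m ρ x :=
  mul_nonneg (cutoff E).nonneg (mul_nonneg (by positivity) (outerNormPow_nonneg m _))

lemma annularNormPow_of_le_norm (m : ℕ) (hρ : 0 < ρ) (hx : ρ ≤ ‖x‖) :
    annularNormPow m ρ x = cutoff E x * ‖x‖ ^ m := by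
  have hnorm : ‖ρ⁻¹ • x‖ = ρ⁻¹ * ‖x‖ := by
    rw [norm_smul, norm_inv, Real.norm_of_nonneg hρ.le]
  have hone : 1 ≤ ‖ρ⁻¹ • x‖ := by rwa [hnorm, le_inv_mul_iff₀ hρ, mul_one]
  rw [annularNormPow, outerNormPow_of_one_le_norm m hone, hnorm, smul_eq_mul, smul_eq_mul,
    ← mul_pow, mul_inv_cancel_left₀ hρ.ne']

lemma annularNormPow_eventuallyEq_zero (m : ℕ) (ρ : ℝ) : annularNormPow m ρ =ᶠ[𝓝 (0 : E)] 0 := by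
  have hcont : Tendsto (fun x : E => ρ⁻¹ • x) (𝓝 0) (𝓝 0) := by
    simpa using (continuous_const_smul ρ⁻¹).tendsto (0 : E)
  filter_upwards [hcont.eventually (outerNormPow_eventuallyEq_zero m)] with x hx
  simp [annularNormPow, hx]

lemma derivBoundOn_annularNormPow_singleton_zero (m : ℕ) (ρ : ℝ) :
    DerivBoundOn m (annularNormPow m ρ : E → ℝ) {0} 0 := by
  rintro k - _ rfl
  simp [((annularNormPow_eventuallyEq_zero m ρ).iteratedFDeriv ℝ k).eq_of_nhds]

lemma contDiff_annularNormPow (m : ℕ) (ρ : ℝ) (N : ℕ∞) :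
    ContDiff ℝ N (annularNormPow m ρ : E → ℝ) :=
  (cutoff E).contDiff.smul
    (((contDiff_outerNormPow m N).comp (contDiff_const_smul ρ⁻¹)).const_smul (ρ ^ m))

variable [FiniteDimensional ℝ E]

variable (E) in
lemma exists_derivBoundOn_annularNormPow (m : ℕ) :
    ∃ B, ∀ ρ : ℝ, 0 < ρ → ρ ≤ 1 → DerivBoundOn m (annularNormPow m ρ : E → ℝ) univ B := by
  obtain ⟨C, hC0, hC⟩ :=
    (homogeneousOutsideUnitBall_outerNormPow (E := E) m).exists_derivBoundOn_rescale
      (contDiff_outerNormPow m m)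
  obtain ⟨A, -, hA⟩ := exists_derivBoundOn_smul_of_hasCompactSupport (F := ℝ) (m := m)
    (cutoff E).contDiff (cutoff E).hasCompactSupport
  rw [(cutoff E).tsupport_eq] at hA
  refine ⟨A * C, fun ρ hρ0 hρ1 => hA _ C ?_ hC0 (hC ρ hρ0 hρ1)⟩
  exact ((contDiff_outerNormPow m m).comp (contDiff_const_smul ρ⁻¹)).const_smul (ρ ^ m)

end NormPow

section Majorant

lemma exists_radii_of_eventually_nonneg_add {E : Type*} [NormedAddCommGroup E] {p w : E → ℝ}
    (hw : ∀ x, 0 ≤ p x + w x) (hsmall : ∀ ε > 0, ∀ᶠ x in 𝓝 0, 0 ≤ p x + ε * w x) :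
    ∃ d : ℕ → ℝ, (∀ j, 0 < d j ∧ d j ≤ 1) ∧
      ∀ x ≠ 0, ∃ j, d j ≤ ‖x‖ ∧ 0 ≤ p x + (1 / 2) ^ j * w x := by
  have hball (j : ℕ) : ∃ d > 0, d ≤ (1 / 2 : ℝ) ^ j ∧
      ∀ x, ‖x‖ < d → 0 ≤ p x + (1 / 2) ^ (j + 1) * w x := by
    obtain ⟨δ, hδ0, hδ⟩ := Metric.eventually_nhds_iff.1 (hsmall ((1 / 2) ^ (j + 1)) (by positivity))
    exact ⟨min δ ((1 / 2) ^ j), by positivity, min_le_right _ _,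
      fun x hx => hδ (by simpa using hx.trans_le (min_le_left _ _))⟩
  choose d hd0 hdpow hd using hball
  refine ⟨d, fun j => ⟨hd0 j, (hdpow j).trans (pow_le_one₀ (by norm_num) (by norm_num))⟩,
    fun x hx => ?_⟩
  have hex : ∃ j, d j ≤ ‖x‖ := by
    obtain ⟨j, hj⟩ := exists_pow_lt_of_lt_one (norm_pos_iff.2 hx) (one_half_lt_one (α := ℝ))
    exact ⟨j, (hdpow j).trans hj.le⟩
  classical
  refine ⟨Nat.find hex, Nat.find_spec hex, ?_⟩
  rcases hfind : Nat.find hex with _ | i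
  · simpa using hw x
  · exact hd i x (not_le.1 (Nat.find_min hex (by lia)))

variable (E : Type*) [NormedAddCommGroup E] [InnerProductSpace ℝ E] [FiniteDimensional ℝ E] (m : ℕ)

lemma exists_flat_majorant_annularNormPow :
    ∃ B, ∀ d : ℕ → ℝ, (∀ j, 0 < d j ∧ d j ≤ 1) →
      ∃ h : E → ℝ, ContDiff ℝ m h ∧ DerivBoundOn m h univ B ∧ DerivBoundOn m h {0} 0 ∧
        ∀ j x, (1 / 2) ^ j * annularNormPow m (d j) x ≤ h x := by
  obtain ⟨B, hB⟩ := exists_derivBoundOn_annularNormPow E m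
  refine ⟨∑' j : ℕ, |(1 / 2) ^ j| * B, fun d hd => ?_⟩
  have hsumB : Summable fun j : ℕ => |(1 / 2 : ℝ) ^ j| * B :=
    summable_geometric_two.abs.mul_right B
  have hA (j : ℕ) : ContDiff ℝ m (annularNormPow m (d j) : E → ℝ) :=
    contDiff_annularNormPow m (d j) m
  let u (j : ℕ) (x : E) : ℝ := (1 / 2 : ℝ) ^ j • annularNormPow m (d j) x
  have hu (j : ℕ) : ContDiff ℝ m (u j) := (hA j).const_smul _
  have huB (j : ℕ) : DerivBoundOn m (u j) univ (|(1 / 2) ^ j| * B) :=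
    (hB (d j) (hd j).1 (hd j).2).const_smul (hA j) _
  have hu0 (j : ℕ) : DerivBoundOn m (u j) {0} 0 :=
    ((derivBoundOn_annularNormPow_singleton_zero m (d j)).const_smul (hA j) _).mono (mul_zero _).le
  have hu_nonneg (j : ℕ) (x : E) : 0 ≤ u j x :=
    mul_nonneg (by positivity) (annularNormPow_nonneg m (hd j).1.le x)
  have hsum (x : E) : Summable fun j => u j x :=
    .of_norm_bounded hsumB fun j => by simpa using huB j 0 m.zero_le x trivial
  exact ⟨fun x => ∑' j, u j x, DerivBoundOn.contDiff_tsum hu hsumB huB,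
    .tsum hu hsumB huB hsumB huB,
    by simpa using DerivBoundOn.tsum hu hsumB huB summable_zero hu0,
    fun j x => (hsum x).le_tsum j fun i _ => hu_nonneg i x⟩

theorem exists_flat_correction :
    ∃ B, ∀ p : E → ℝ, (∀ x, 0 ≤ p x + ‖x‖ ^ m) →
      (∀ ε > 0, ∀ᶠ x in 𝓝 0, 0 ≤ p x + ε * ‖x‖ ^ m) →
      ∃ h : E → ℝ, ContDiff ℝ m h ∧ DerivBoundOn m h univ B ∧ DerivBoundOn m h {0} 0 ∧
        ∀ x, 0 ≤ cutoff E x * p x + h x := by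
  obtain ⟨B, hB⟩ := exists_flat_majorant_annularNormPow E m
  refine ⟨B, fun p hp hsmall => ?_⟩
  obtain ⟨d, hd, hcover⟩ := exists_radii_of_eventually_nonneg_add hp hsmall
  obtain ⟨h, hh, hhB, hh0, hle⟩ := hB d hd
  refine ⟨h, hh, hhB, hh0, fun x => ?_⟩
  rcases eq_or_ne x 0 with rfl | hx
  · have hp0 : 0 ≤ p 0 := le_of_forall_pos_le_add fun ε hε =>
      (hsmall ε hε).self_of_nhds.trans <| by
        gcongr
        exact mul_le_of_le_one_right hε.le (pow_le_one₀ (norm_nonneg _) (by simp))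
    have hh_nonneg : 0 ≤ h 0 :=
      (mul_nonneg (by positivity) (annularNormPow_nonneg m (hd 0).1.le 0)).trans (hle 0 0)
    exact add_nonneg (mul_nonneg (cutoff E).nonneg hp0) hh_nonneg
  · obtain ⟨j, hjx, hj⟩ := hcover x hx
    calc 0 ≤ cutoff E x * (p x + (1 / 2) ^ j * ‖x‖ ^ m) := mul_nonneg (cutoff E).nonneg hj
      _ = cutoff E x * p x + (1 / 2) ^ j * annularNormPow m (d j) x := by
        rw [annularNormPow_of_le_norm m (hd j).1 hjx]
        ring
      _ ≤ cutoff E x * p x + h x := by gcongr; exact hle j x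

end Majorant

section MultiIndex

variable {m n : ℕ} {F G : Euc n → ℝ} {α : Fin n → ℕ}

/-- The list of directions, with multiplicity, along which `mD α` differentiates. -/
def directions (α : Fin n → ℕ) : List (Fin n) :=
  (List.finRange n).flatMap fun i => List.replicate (α i) i

lemma length_directions (α : Fin n → ℕ) : (directions α).length = deg α := by
  simp [directions, deg, List.length_flatMap, Fin.sum_univ_def]

lemma sum_single_directions (s : Fin n →₀ ℕ) :
    ((directions s).map fun i => Finsupp.single i 1).sum = s := by
  simp [directions, List.flatMap_def, List.sum_flatten, Function.comp_def, ← Fin.sum_univ_def]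

lemma foldr_pD_eq_iteratedFDeriv (l : List (Fin n)) (hF : ContDiff ℝ l.length F) (x : Euc n) :
    l.foldr pD F x =
      iteratedFDeriv ℝ l.length F x fun i => EuclideanSpace.single (l.get i) (1 : ℝ) := by
  induction l generalizing x with
  | nil => simp
  | cons a l ih =>
    have hlt : (l.length : WithTop ℕ∞) < (a :: l).length := mod_cast Nat.lt_succ_self _
    have hfoldr : l.foldr pD F = _ := funext (ih (hF.of_le hlt.le))
    rw [List.foldr_cons, pD, hfoldr]
    exact (((hF.differentiable_iteratedFDeriv hlt) x).iteratedFDeriv_succ_apply_left'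
      (m := fun i => EuclideanSpace.single ((a :: l).get i) (1 : ℝ))).symm

lemma mD_eq_iteratedFDeriv (hF : ContDiff ℝ m F) (hα : deg α ≤ m) (x : Euc n) :
    mD α F x = iteratedFDeriv ℝ (directions α).length F x
      fun i => EuclideanSpace.single ((directions α).get i) (1 : ℝ) :=
  foldr_pD_eq_iteratedFDeriv (directions α)
    (hF.of_le (mod_cast (length_directions α).trans_le hα)) x

lemma abs_mD_le_norm_iteratedFDeriv (hF : ContDiff ℝ m F) (hα : deg α ≤ m) (x : Euc n) :
    |mD α F x| ≤ ‖iteratedFDeriv ℝ (deg α) F x‖ := by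
  rw [mD_eq_iteratedFDeriv hF hα, ← length_directions, ← Real.norm_eq_abs]
  simpa using (iteratedFDeriv ℝ (directions α).length F x).le_opNorm
    fun i => EuclideanSpace.single ((directions α).get i) (1 : ℝ)

lemma mD_eq_of_iteratedFDeriv_eq {x : Euc n} (hF : ContDiff ℝ m F) (hG : ContDiff ℝ m G)
    (hα : deg α ≤ m) (hFG : iteratedFDeriv ℝ (deg α) F x = iteratedFDeriv ℝ (deg α) G x) :
    mD α F x = mD α G x := by
  rw [← length_directions] at hFG
  rw [mD_eq_iteratedFDeriv hF hα, mD_eq_iteratedFDeriv hG hα, hFG]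

end MultiIndex

section Polynomial

open MvPolynomial

variable {n : ℕ}

lemma contDiff_peval (P : MPoly n) {N : WithTop ℕ∞} : ContDiff ℝ N (peval P) :=
  contDiffOn_univ.1 <| (AnalyticOnNhd.eval_continuousLinearMap'
    (fun i => (EuclideanSpace.proj i : Euc n →L[ℝ] ℝ)) P).contDiffOn uniqueDiffOn_univ

lemma hasFDerivAt_peval (P : MPoly n) (x : Euc n) :
    HasFDerivAt (peval P)
      (∑ i, peval (pderiv i P) x • (EuclideanSpace.proj i : Euc n →L[ℝ] ℝ)) x := by
  induction P using MvPolynomial.induction_on with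
  | C a =>
    have hconst : peval (C a) = fun _ : Euc n => a := by ext; simp [peval]
    rw [hconst]
    simpa [peval] using hasFDerivAt_const (𝕜 := ℝ) a x
  | add p q hp hq =>
    convert! hp.add hq using 1
    · ext; simp [peval]
    · simp [peval, add_smul, Finset.sum_add_distrib]
  | mul_X p i hp =>
    convert! hp.mul (EuclideanSpace.proj i : Euc n →L[ℝ] ℝ).hasFDerivAt using 1
    · ext; simp [peval]
    · ext v
      simp [peval, pderiv_X, Pi.single_apply, apply_ite, add_mul, Finset.sum_add_distrib,
        mul_assoc, ← Finset.mul_sum]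

lemma pD_peval (i : Fin n) (P : MPoly n) : pD i (peval P) = peval (pderiv i P) := by
  ext x
  simp [pD, (hasFDerivAt_peval P x).fderiv]

lemma foldr_pD_peval (l : List (Fin n)) (P : MPoly n) :
    l.foldr pD (peval P) = peval (l.foldr (fun i Q => pderiv i Q) P) := by
  induction l with
  | nil => rfl
  | cons a l ih => simp only [List.foldr_cons, ih, pD_peval]

lemma abs_coeff_add_le_abs_coeff_foldr_pderiv (P : MPoly n) (l : List (Fin n)) (s : Fin n →₀ ℕ) :
    |coeff (s + (l.map fun i => Finsupp.single i 1).sum) P| ≤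
      |coeff s (l.foldr (fun i Q => pderiv i Q) P)| := by
  induction l generalizing s with
  | nil => simp
  | cons a l ih =>
    rw [List.foldr_cons, coeff_pderiv, List.map_cons, List.sum_cons, ← add_assoc, abs_mul]
    refine (ih _).trans (le_mul_of_one_le_right (abs_nonneg _) ?_)
    rw [abs_of_nonneg (by positivity)]
    linarith [(s a).cast_nonneg (α := ℝ)]

lemma abs_coeff_le_abs_mD_zero (P : MPoly n) (s : Fin n →₀ ℕ) :
    |coeff s P| ≤ |mD s (peval P) 0| := by
  have hmD : mD s (peval P) 0 = coeff 0 ((directions s).foldr (fun i Q => pderiv i Q) P) := by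
    rw [← constantCoeff_eq, ← eval_zero]
    exact congrFun (foldr_pD_peval (directions s) P) 0
  simpa [hmD, sum_single_directions] using
    abs_coeff_add_le_abs_coeff_foldr_pderiv P (directions s) 0

lemma exists_derivBoundOn_peval (m d : ℕ) {K : Set (Euc n)} (hK : IsCompact K) :
    ∃ B, 0 ≤ B ∧ ∀ P : MPoly n, P.totalDegree ≤ d → (∀ s, |coeff s P| ≤ 1) →
      DerivBoundOn m (peval P) K B := by
  have hmono (s : Fin n →₀ ℕ) := exists_derivBoundOn_of_isCompact (m := m)
    (contDiff_peval (monomial s 1)) hK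
  choose b hb0 hb using hmono
  set S := (Finsupp.finite_of_degree_le (σ := Fin n) d).toFinset
  refine ⟨∑ s ∈ S, b s, Finset.sum_nonneg fun s _ => hb0 s, fun P hP hcoeff => ?_⟩
  have hsupp : P.support ⊆ S := fun s hs =>
    (Finsupp.finite_of_degree_le d).mem_toFinset.2 ((le_totalDegree hs).trans hP)
  have hP_eq : peval P = fun x => ∑ s ∈ S, coeff s P • peval (monomial s 1) x := by
    ext x
    have hsum : ∑ s ∈ S, monomial s (coeff s P) = P := by
      conv_rhs => rw [← support_sum_monomial_coeff P]
      exact (Finset.sum_subset hsupp fun s _ hs => by simp [notMem_support_iff.1 hs]).symm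
    conv_lhs => rw [← hsum]
    simp [peval, eval_monomial]
  rw [hP_eq]
  refine DerivBoundOn.sum (fun s _ => ?_) fun s _ => (contDiff_peval _).const_smul _
  exact ((hb s).const_smul (contDiff_peval _) _).mono
    (mul_le_of_le_one_left (hb0 s) (hcoeff s))

lemma exists_derivBoundOn_cutoff_mul_peval (m n : ℕ) :
    ∃ A, ∀ P : MPoly n, P.totalDegree ≤ m →
      (∀ β : Fin n → ℕ, deg β ≤ m → |mD β (peval P) 0| ≤ 1) →
      DerivBoundOn m (fun x => cutoff (Euc n) x * peval P x) univ A := by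
  obtain ⟨A, -, hA⟩ := exists_derivBoundOn_smul_of_hasCompactSupport (F := ℝ) (m := m)
    (cutoff (Euc n)).contDiff (cutoff (Euc n)).hasCompactSupport
  obtain ⟨B, hB0, hB⟩ :=
    exists_derivBoundOn_peval m m (cutoff (Euc n)).hasCompactSupport.isCompact
  refine ⟨A * B, fun P hdeg hP => hA _ B (contDiff_peval P) hB0 (hB P hdeg fun s => ?_)⟩
  by_cases hs : s ∈ P.support
  · refine (abs_coeff_le_abs_mD_zero P s).trans (hP s ?_)
    simpa [deg, Finsupp.sum_fintype] using (le_totalDegree hs).trans hdeg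
  · simp [notMem_support_iff.1 hs]

end Polynomial

/-- **Lemma 3.1 (B)**: every `P ∈ Γ₀⁺` is the `m`-jet at `0` of a nonnegative `C^m`
function of controlled norm. -/
theorem Gamma0plus_has_nonneg_extension (m n : ℕ) (hm : 0 < m) (hn : 0 < n) :
    ∃ C : ℝ, 0 < C ∧
      ∀ P ∈ Gamma0plus m n,
        ∃ F : Euc n → ℝ, CmNormLe m n F C ∧ (∀ y, 0 ≤ F y) ∧ IsJetPlusAt m n F 0 P := by
  obtain ⟨A, hA⟩ := exists_derivBoundOn_cutoff_mul_peval m n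
  obtain ⟨B, hB⟩ := exists_flat_correction (Euc n) m
  refine ⟨max 1 (A + B), by positivity, fun P hP => ?_⟩
  have hsmall (ε : ℝ) (hε : ε > 0) : ∀ᶠ x in 𝓝 0, 0 ≤ peval P x + ε * ‖x‖ ^ m := by
    obtain ⟨δ, hδ, hPδ⟩ := hP.2.2.2 ε hε
    filter_upwards [Metric.closedBall_mem_nhds 0 hδ] with x hx using hPδ x (by simpa using hx)
  obtain ⟨h, hh, hhB, hh0, hnonneg⟩ := hB (peval P) hP.2.2.1 hsmall
  have hcut : ContDiff ℝ m fun x => cutoff (Euc n) x * peval P x :=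
    (cutoff (Euc n)).contDiff.mul (contDiff_peval P)
  have hF := hcut.add hh
  refine ⟨_, ⟨hF, fun α hα x => ?_⟩, hnonneg, hP.1, fun α hα => ?_⟩
  · exact (abs_mD_le_norm_iteratedFDeriv hF hα x).trans
      (((hA P hP.1 hP.2.1).add hhB hcut hh _ hα x trivial).trans (le_max_right _ _))
  · refine mD_eq_of_iteratedFDeriv_eq (contDiff_peval P) hF hα ?_
    have hα' : (deg α : WithTop ℕ∞) ≤ m := mod_cast hα
    rw [fun_iteratedFDeriv_add_apply (hcut.of_le hα').contDiffAt (hh.of_le hα').contDiffAt,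
      iteratedFDeriv_cutoff_mul_apply_zero, norm_le_zero_iff.1 (hh0 _ hα 0 rfl), add_zero]

end
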